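/- Let H be a real Hilbert space and Γ ⊆ (0,∞) a nonempty closed interval. Suppose A₁ : H → H is maximally monotone and L-Lipschitz, and A₂ : H ⇉ H is maximally monotone and μ-strongly monotone, with P := zer(A₁ + A₂) ≠ ∅. Set D := zer(A₁⁻¹ − A₂⁻¹ ∘ (−Id)). Let (γ_n)_{n∈ℕ} ⊆ Γ converge R-linearly to γ* ∈ Γ and let T_γ := Id − J_{γA₁} + J_{γA₂} ∘ (2J_{γA₁} − Id). Given x₀ ∈ H, set z₀ = J_{γ₀A₁}x₀ and for each n ∈ ℕ define y_n = J_{γ_nA₂}(2z_n − x_n), w_n = x_n − z_n + y_n, z_{n+1} = J_{γ_nA₁}w_n, and x_{n+1} = (γ_{n+1}/γ_n)w_n + (1 − γ_{n+1}/γ_n)z_{n+1}. Then: (i) (x_n) and (w_n) converge R-linearly to the same point x ∈ Fix T_{γ*}; (ii) (z_n) and (y_n) converge R-linearly to the same point z := J_{γ*A₁}x, and z ∈ P; (iii) ((x_n − z_n)/γ_n) and ((w_n − y_n)/γ_n) converge R-linearly to g := (x − z)/γ*, and g ∈ D. -/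

import Mathlib

open scoped Pointwise RealInnerProductSpace

variable {H : Type*}

/-- A set-valued operator is monotone. -/
def SVMonotone [NormedAddCommGroup H] [InnerProductSpace ℝ H] (A : H → Set H) : Prop :=
  ∀ ⦃x y u v : H⦄, u ∈ A x → v ∈ A y → 0 ≤ ⟪x - y, u - v⟫

/-- The graph of a set-valued operator. -/
def SVGraph (A : H → Set H) : Set (H × H) := {p | p.2 ∈ A p.1}

/-- A set-valued operator is maximally monotone. -/
def MaxMonotone [NormedAddCommGroup H] [InnerProductSpace ℝ H] (A : H → Set H) : Prop :=
  SVMonotone A ∧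
    ∀ B : H → Set H, SVMonotone B → SVGraph A ⊆ SVGraph B → SVGraph B = SVGraph A

/-- The inverse of a set-valued operator. -/
def SVInv (A : H → Set H) : H → Set H := fun u => {x | u ∈ A x}

/-- The set of fixed points of a single-valued operator. -/
def FixSet (T : H → H) : Set H := {x | T x = x}

/-- `J` is the resolvent `(Id + γA)⁻¹` of the set-valued operator `A`, i.e.
`J x` is a point with `x - J x ∈ γ • A (J x)` for every `x`. -/
def IsResolventOf [NormedAddCommGroup H] [InnerProductSpace ℝ H]
    (A : H → Set H) (γ : ℝ) (J : H → H) : Prop :=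
  ∀ x : H, x - J x ∈ γ • A (J x)

/-- A set-valued operator is `μ`-strongly monotone. -/
def SVStrongMonotone [NormedAddCommGroup H] [InnerProductSpace ℝ H]
    (μ : ℝ) (A : H → Set H) : Prop :=
  ∀ ⦃x y u v : H⦄, u ∈ A x → v ∈ A y → μ * ‖x - y‖ ^ 2 ≤ ⟪x - y, u - v⟫

/-- A sequence converges `R`-linearly to a point. -/
def RLinearTo {E : Type*} [NormedAddCommGroup E] (x : ℕ → E) (p : E) : Prop :=
  ∃ C : ℝ, 0 ≤ C ∧ ∃ r ∈ Set.Ioo (0 : ℝ) 1, ∀ n : ℕ, ‖x n - p‖ ≤ C * r ^ n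

/-!
Write `T_γ` for the Douglas–Rachford operator and `Q_{δ←γ} = (δ/γ) Id + (1 - δ/γ) J_{γA₁}` for the
relocator, which turns `J_{γA₁}` into `J_{δA₁}` in the sense that `J_{δA₁} ∘ Q_{δ←γ} = J_{γA₁}`.
The algorithm is then `x_{n+1} = Q_{γ_{n+1}←γ_n} (T_{γ_n} x_n)`. If `p` is a zero of `A₁ + A₂`, the
points `p + γ A₁ p` are fixed by `T_γ` and moved into each other by the relocators. Since `T_γ` is a
contraction whose factor depends continuously on `γ`, and `Q_{δ←γ}` is Lipschitz with constant
`1 + |δ/γ - 1|`, the errors `x_n - (p + γ_n A₁ p)` shrink by factors tending to the contraction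
factor of `T_{γ*}`, which is less than `1`.
-/

section RLinearConvergence

open Filter Asymptotics Topology

variable {E F : Type*} [NormedAddCommGroup E] [NormedAddCommGroup F]
  {x y : ℕ → E} {p q : E}

theorem rLinearTo_iff_isBigO :
    RLinearTo x p ↔
      ∃ r ∈ Set.Ioo (0 : ℝ) 1, (fun n => x n - p) =O[atTop] fun n : ℕ => r ^ n := by
  constructor
  · rintro ⟨C, -, r, hr, hC⟩
    exact ⟨r, hr, (IsBigO.of_norm_le hC).trans (isBigO_const_mul_self C _ _)⟩
  · rintro ⟨r, hr, hO⟩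
    obtain ⟨C, hC, hbound⟩ := bound_of_isBigO_nat_atTop hO
    refine ⟨C, hC.le, r, hr, fun n => ?_⟩
    have hpow : 0 < r ^ n := pow_pos hr.1 n
    simpa only [Real.norm_of_nonneg hpow.le] using hbound hpow.ne'

namespace RLinearTo

protected theorem tendsto (hx : RLinearTo x p) : Tendsto x atTop (𝓝 p) := by
  obtain ⟨r, hr, hO⟩ := rLinearTo_iff_isBigO.1 hx
  exact tendsto_sub_nhds_zero_iff.1
    (hO.trans_tendsto (tendsto_pow_atTop_nhds_zero_of_lt_one hr.1.le hr.2))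

theorem of_norm_sub_le {u : ℕ → F} {v : F} {c : ℝ} (hx : RLinearTo x p)
    (h : ∀ n, ‖u n - v‖ ≤ c * ‖x n - p‖) : RLinearTo u v := by
  obtain ⟨r, hr, hO⟩ := rLinearTo_iff_isBigO.1 hx
  exact rLinearTo_iff_isBigO.2 ⟨r, hr, (isBigO_of_le' atTop h).trans hO⟩

protected theorem add (hx : RLinearTo x p) (hy : RLinearTo y q) :
    RLinearTo (fun n => x n + y n) (p + q) := by
  obtain ⟨r, hr, hxO⟩ := rLinearTo_iff_isBigO.1 hx
  obtain ⟨s, hs, hyO⟩ := rLinearTo_iff_isBigO.1 hy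
  refine rLinearTo_iff_isBigO.2 ⟨max r s, ⟨lt_max_of_lt_left hr.1, max_lt hr.2 hs.2⟩, ?_⟩
  simp only [add_sub_add_comm]
  exact (hxO.trans (isBigO_pow_pow_of_le_left hr.1.le (le_max_left r s))).add
    (hyO.trans (isBigO_pow_pow_of_le_left hs.1.le (le_max_right r s)))

protected theorem neg (hx : RLinearTo x p) : RLinearTo (fun n => -x n) (-p) :=
  hx.of_norm_sub_le (c := 1) fun n => by rw [one_mul, neg_sub_neg, norm_sub_rev]

protected theorem sub (hx : RLinearTo x p) (hy : RLinearTo y q) :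
    RLinearTo (fun n => x n - y n) (p - q) := by
  simpa only [sub_eq_add_neg] using hx.add hy.neg

theorem lipschitz_comp {K : NNReal} {f : E → F} (hx : RLinearTo x p) (hf : LipschitzWith K f) :
    RLinearTo (fun n => f (x n)) (f p) :=
  hx.of_norm_sub_le fun n => hf.norm_sub_le (x n) p

theorem const_add_smul [NormedSpace ℝ E] {γ : ℕ → ℝ} {γs : ℝ} (hγ : RLinearTo γ γs) (p v : E) :
    RLinearTo (fun n => p + γ n • v) (p + γs • v) :=
  hγ.of_norm_sub_le (c := ‖v‖) fun n => by
    rw [add_sub_add_left_eq_sub, ← sub_smul, norm_smul, mul_comm]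

end RLinearTo

theorem rLinearTo_zero_of_norm_succ_le {ρ : ℕ → ℝ} {κ : ℝ} (hκ : κ < 1)
    (hρ : Tendsto ρ atTop (𝓝 κ)) (h : ∀ n, ‖x (n + 1)‖ ≤ ρ n * ‖x n‖) : RLinearTo x 0 := by
  obtain ⟨r, hκr, hr1⟩ := exists_between (max_lt hκ one_pos)
  have hr0 : 0 < r := (le_max_right κ 0).trans_lt hκr
  obtain ⟨N, hN⟩ := eventually_atTop.1
    (hρ.eventually_le_const ((le_max_left κ 0).trans_lt hκr))
  have htail (k : ℕ) : ‖x (N + k)‖ ≤ r ^ k * ‖x N‖ :=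
    le_geom (u := fun k => ‖x (N + k)‖) hr0.le k fun j _ =>
      (h (N + j)).trans (mul_le_mul_of_nonneg_right (hN _ (N.le_add_right j)) (norm_nonneg _))
  refine rLinearTo_iff_isBigO.2 ⟨r, ⟨hr0, hr1⟩, .of_bound (‖x N‖ / r ^ N) ?_⟩
  filter_upwards [eventually_ge_atTop N] with n hn
  obtain ⟨k, rfl⟩ := Nat.exists_eq_add_of_le hn
  calc ‖x (N + k) - 0‖ ≤ r ^ k * ‖x N‖ := by simpa only [sub_zero] using htail k
    _ = ‖x N‖ / r ^ N * ‖r ^ (N + k)‖ := by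
      rw [Real.norm_of_nonneg (by positivity), pow_add]
      field_simp

end RLinearConvergence

section Operators

open Filter Topology

variable [NormedAddCommGroup H] [InnerProductSpace ℝ H]

theorem norm_le_norm_add_of_inner_nonneg {d e : H} (h : 0 ≤ ⟪d, e⟫) : ‖d‖ ≤ ‖d + e‖ := by
  refine le_of_sq_le_sq ?_ (norm_nonneg _)
  rw [norm_add_sq_real]
  linarith [sq_nonneg ‖e‖]

theorem svStrongMonotone_zero_iff {A : H → Set H} : SVStrongMonotone 0 A ↔ SVMonotone A := by
  simp only [SVStrongMonotone, SVMonotone, zero_mul]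

theorem SVStrongMonotone.monotone {A : H → Set H} {μ : ℝ} (hA : SVStrongMonotone μ A)
    (hμ : 0 ≤ μ) : SVMonotone A :=
  fun _ _ _ _ hu hv => (by positivity : 0 ≤ μ * _).trans (hA hu hv)

theorem SVStrongMonotone.smul {A : H → Set H} {μ γ : ℝ} (hA : SVStrongMonotone μ A)
    (hγ : 0 ≤ γ) : SVStrongMonotone (γ * μ) fun x => γ • A x := by
  rintro x y _ _ ⟨u, hu, rfl⟩ ⟨v, hv, rfl⟩
  simpa only [← smul_sub, real_inner_smul_right, mul_assoc]
    using mul_le_mul_of_nonneg_left (hA hu hv) hγ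

theorem SVMonotone.smul {A : H → Set H} {γ : ℝ} (hA : SVMonotone A) (hγ : 0 ≤ γ) :
    SVMonotone fun x => γ • A x := by
  simpa only [mul_zero, svStrongMonotone_zero_iff]
    using (svStrongMonotone_zero_iff.2 hA).smul hγ

theorem isResolventOf_singleton_iff {A : H → H} {γ : ℝ} {J : H → H} :
    IsResolventOf (fun x => {A x}) γ J ↔ ∀ x, x - J x = γ • A (J x) := by
  simp only [IsResolventOf, Set.smul_set_singleton, Set.mem_singleton_iff]

namespace IsResolventOf

variable {A : H → Set H} {γ : ℝ} {J : H → H}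

theorem inner_nonneg (hJ : IsResolventOf A γ J) (hA : SVMonotone A) (hγ : 0 ≤ γ) (x y : H) :
    0 ≤ ⟪J x - J y, x - J x - (y - J y)⟫ :=
  hA.smul hγ (hJ x) (hJ y)

theorem apply_eq (hJ : IsResolventOf A γ J) (hA : SVMonotone A) (hγ : 0 ≤ γ) {x q : H}
    (hq : x - q ∈ γ • A q) : J x = q := by
  have h : 0 ≤ ⟪J x - q, x - J x - (x - q)⟫ := hA.smul hγ (hJ x) hq
  rw [sub_sub_sub_cancel_left, ← neg_sub (J x) q, inner_neg_right, neg_nonneg] at h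
  exact sub_eq_zero.1 (real_inner_self_nonpos.1 h)

protected theorem norm_sub_le (hJ : IsResolventOf A γ J) (hA : SVMonotone A) (hγ : 0 ≤ γ)
    (x y : H) : ‖J x - J y‖ ≤ ‖x - y‖ := by
  convert norm_le_norm_add_of_inner_nonneg (hJ.inner_nonneg hA hγ x y) using 2
  abel

theorem norm_id_sub_sub_le (hJ : IsResolventOf A γ J) (hA : SVMonotone A) (hγ : 0 ≤ γ)
    (x y : H) : ‖x - J x - (y - J y)‖ ≤ ‖x - y‖ := by
  have h := hJ.inner_nonneg hA hγ x y
  rw [real_inner_comm] at h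
  convert norm_le_norm_add_of_inner_nonneg h using 2
  abel

end IsResolventOf

/-- The relocator `Q_{δ←γ} = (δ/γ) Id + (1 - δ/γ) J`, where `J` stands for the resolvent of `γA`.
It transports fixed points of the Douglas–Rachford operator from step size `γ` to step size `δ`. -/
noncomputable def relocator (J : H → H) (γ δ : ℝ) (x : H) : H :=
  (δ / γ) • x + (1 - δ / γ) • J x

section Relocator

variable {A : H → Set H} {γ δ : ℝ} {J Jδ : H → H}

theorem resolvent_relocator (hA : SVMonotone A) (hγ : γ ≠ 0) (hδ : 0 ≤ δ)
    (hJ : IsResolventOf A γ J) (hJδ : IsResolventOf A δ Jδ) (x : H) :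
    Jδ (relocator J γ δ x) = J x := by
  refine hJδ.apply_eq hA hδ ?_
  have hsub : relocator J γ δ x - J x = (δ / γ) • (x - J x) := by
    rw [relocator]
    module
  have hmem := Set.smul_mem_smul_set (a := δ / γ) (hJ x)
  rwa [smul_smul, div_mul_cancel₀ δ hγ, ← hsub] at hmem

theorem eq_resolvent_of_relocator {J : ℝ → H → H} {γ : ℕ → ℝ} {x z w : ℕ → H}
    (hA : SVMonotone A) (hJ : ∀ γ, 0 < γ → IsResolventOf A γ (J γ)) (hγ : ∀ n, 0 < γ n)
    (hz0 : z 0 = J (γ 0) (x 0)) (hz : ∀ n, z (n + 1) = J (γ n) (w n))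
    (hx : ∀ n, x (n + 1) = relocator (J (γ n)) (γ n) (γ (n + 1)) (w n)) :
    ∀ n, z n = J (γ n) (x n)
  | 0 => hz0
  | n + 1 => by
    rw [hz, hx, resolvent_relocator hA (hγ n).ne' (hγ _).le (hJ _ (hγ n)) (hJ _ (hγ _))]

theorem relocator_add_smul (hγ : γ ≠ 0) {p u : H} (hp : J (p + γ • u) = p) :
    relocator J γ δ (p + γ • u) = p + δ • u := by
  rw [relocator, hp, smul_add, smul_smul, div_mul_cancel₀ δ hγ]
  module

theorem norm_relocator_sub_le (hA : SVMonotone A) (hγ : 0 ≤ γ) (hJ : IsResolventOf A γ J)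
    (x y : H) :
    ‖relocator J γ δ x - relocator J γ δ y‖ ≤ (1 + |δ / γ - 1|) * ‖x - y‖ := by
  have hsub : relocator J γ δ x - relocator J γ δ y =
      (x - y) + (δ / γ - 1) • (x - J x - (y - J y)) := by
    simp only [relocator]
    module
  calc ‖relocator J γ δ x - relocator J γ δ y‖
      ≤ ‖x - y‖ + |δ / γ - 1| * ‖x - J x - (y - J y)‖ := by
        rw [hsub, ← Real.norm_eq_abs, ← norm_smul]
        exact norm_add_le _ _
    _ ≤ ‖x - y‖ + |δ / γ - 1| * ‖x - y‖ := by
        gcongr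
        exact hJ.norm_id_sub_sub_le hA hγ x y
    _ = (1 + |δ / γ - 1|) * ‖x - y‖ := by ring

end Relocator

/-- The Douglas–Rachford operator `Id - J₁ + J₂ ∘ (2 J₁ - Id)`, where `J₁` and `J₂` stand for the
resolvents of the two operators. -/
def douglasRachford (J₁ J₂ : H → H) (x : H) : H :=
  x - J₁ x + J₂ ((2 : ℝ) • J₁ x - x)

/-- A contraction factor of the Douglas–Rachford operator of an `M`-Lipschitz monotone operator and
an `m`-strongly monotone operator. It comes from
`‖T x - T y‖² ≤ ‖x - y‖² - 2m / (1 + 2m) ‖J₁ x - J₁ y‖²` and `‖x - y‖ ≤ (1 + M) ‖J₁ x - J₁ y‖`. -/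
noncomputable def douglasRachfordRate (m M : ℝ) : ℝ :=
  √(1 - 2 * m / (1 + 2 * m) / (1 + M) ^ 2)

theorem douglasRachfordRate_lt_one {m M : ℝ} (hm : 0 < m) (hM : 0 ≤ M) :
    douglasRachfordRate m M < 1 := by
  rw [douglasRachfordRate, Real.sqrt_lt' one_pos, one_pow]
  exact sub_lt_self 1 (by positivity)

theorem tendsto_douglasRachfordRate {ι : Type*} {l : Filter ι} {m M : ι → ℝ} {ms Ms : ℝ}
    (hm : Tendsto m l (𝓝 ms)) (hM : Tendsto M l (𝓝 Ms)) (hms : 0 ≤ ms) (hMs : 0 ≤ Ms) :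
    Tendsto (fun i => douglasRachfordRate (m i) (M i)) l (𝓝 (douglasRachfordRate ms Ms)) := by
  have hm2 : Tendsto (fun i => 2 * m i) l (𝓝 (2 * ms)) := hm.const_mul 2
  exact (((hm2.div (hm2.const_add 1) (by positivity)).div ((hM.const_add 1).pow 2)
    (by positivity)).const_sub 1).sqrt

theorem mul_norm_sq_le_norm_add_sq_sub {d e f : H} {m : ℝ} (hm : 0 ≤ m) (hde : 0 ≤ ⟪d, e⟫)
    (hf : m * ‖f‖ ^ 2 ≤ ⟪f, d - e - f⟫) :
    2 * m / (1 + 2 * m) * ‖d‖ ^ 2 ≤ ‖d + e‖ ^ 2 - ‖e + f‖ ^ 2 := by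
  have hexpand : ⟪f, d - e - f⟫ = ⟪d, f⟫ - ⟪e, f⟫ - ‖f‖ ^ 2 := by
    rw [inner_sub_right, inner_sub_right, real_inner_self_eq_norm_sq, real_inner_comm,
      real_inner_comm e]
  have hsquare : 2 * m / (1 + 2 * m) * ‖d‖ ^ 2 ≤
      ‖d‖ ^ 2 - 2 * ⟪d, f⟫ + (1 + 2 * m) * ‖f‖ ^ 2 := by
    have h : 0 ≤ ‖d - (1 + 2 * m) • f‖ ^ 2 := sq_nonneg _
    rw [norm_sub_sq_real, real_inner_smul_right, norm_smul, mul_pow, Real.norm_eq_abs,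
      sq_abs] at h
    rw [div_mul_eq_mul_div, div_le_iff₀ (by positivity)]
    linarith
  linarith [norm_add_sq_real d e, norm_add_sq_real e f]

theorem norm_add_le_douglasRachfordRate_mul {d e f : H} {m M : ℝ} (hm : 0 ≤ m) (hM : 0 ≤ M)
    (hde : 0 ≤ ⟪d, e⟫) (he : ‖e‖ ≤ M * ‖d‖) (hf : m * ‖f‖ ^ 2 ≤ ⟪f, d - e - f⟫) :
    ‖e + f‖ ≤ douglasRachfordRate m M * ‖d + e‖ := by
  have hadd : ‖d + e‖ ≤ (1 + M) * ‖d‖ := by linarith [norm_add_le d e]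
  have hd : ‖d + e‖ ^ 2 / (1 + M) ^ 2 ≤ ‖d‖ ^ 2 := by
    rw [div_le_iff₀' (by positivity), ← mul_pow]
    gcongr
  have hsq : ‖e + f‖ ^ 2 ≤ (1 - 2 * m / (1 + 2 * m) / (1 + M) ^ 2) * ‖d + e‖ ^ 2 := by
    calc ‖e + f‖ ^ 2 ≤ ‖d + e‖ ^ 2 - 2 * m / (1 + 2 * m) * ‖d‖ ^ 2 := by
          linarith [mul_norm_sq_le_norm_add_sq_sub hm hde hf]
      _ ≤ ‖d + e‖ ^ 2 - 2 * m / (1 + 2 * m) * (‖d + e‖ ^ 2 / (1 + M) ^ 2) := by gcongr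
      _ = (1 - 2 * m / (1 + 2 * m) / (1 + M) ^ 2) * ‖d + e‖ ^ 2 := by ring
  rw [douglasRachfordRate, ← Real.sqrt_sq (norm_nonneg (d + e)),
    ← Real.sqrt_mul' _ (sq_nonneg ‖d + e‖)]
  exact Real.le_sqrt_of_sq_le hsq

section DouglasRachford

variable {A₁ : H → H} {A₂ : H → Set H} {L : NNReal} {μ : ℝ}

theorem norm_douglasRachford_sub_le {γ : ℝ} {J₁ J₂ : H → H}
    (hA₁ : SVMonotone fun p => ({A₁ p} : Set H)) (hL : LipschitzWith L A₁)
    (hA₂ : SVStrongMonotone μ A₂) (hμ : 0 ≤ μ) (hγ : 0 ≤ γ)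
    (hJ₁ : IsResolventOf (fun p => {A₁ p}) γ J₁) (hJ₂ : IsResolventOf A₂ γ J₂) (x y : H) :
    ‖douglasRachford J₁ J₂ x - douglasRachford J₁ J₂ y‖ ≤
      douglasRachfordRate (γ * μ) (γ * L) * ‖x - y‖ := by
  set d := J₁ x - J₁ y with hd
  set e := x - J₁ x - (y - J₁ y) with he
  set f := J₂ ((2 : ℝ) • J₁ x - x) - J₂ ((2 : ℝ) • J₁ y - y) with hf
  have heL : ‖e‖ ≤ γ * L * ‖d‖ := by
    rw [he, isResolventOf_singleton_iff.1 hJ₁ x, isResolventOf_singleton_iff.1 hJ₁ y, ← smul_sub,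
      norm_smul, Real.norm_of_nonneg hγ, mul_assoc]
    exact mul_le_mul_of_nonneg_left (hL.norm_sub_le _ _) hγ
  have hfμ : γ * μ * ‖f‖ ^ 2 ≤ ⟪f, d - e - f⟫ := by
    convert hA₂.smul hγ (hJ₂ ((2 : ℝ) • J₁ x - x)) (hJ₂ ((2 : ℝ) • J₁ y - y)) using 2
    rw [hd, he, hf]
    module
  have hxy : x - y = d + e := by rw [hd, he]; abel
  have hT : douglasRachford J₁ J₂ x - douglasRachford J₁ J₂ y = e + f := by
    rw [douglasRachford, douglasRachford, he, hf]
    abel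
  rw [hxy, hT]
  exact norm_add_le_douglasRachfordRate_mul (by positivity) (by positivity)
    (hJ₁.inner_nonneg hA₁ hγ x y) heL hfμ

theorem resolvent_add_smul_of_singleton {γ : ℝ} {J₁ : H → H}
    (hA₁ : SVMonotone fun p => ({A₁ p} : Set H)) (hγ : 0 ≤ γ)
    (hJ₁ : IsResolventOf (fun p => {A₁ p}) γ J₁) (p : H) : J₁ (p + γ • A₁ p) = p :=
  hJ₁.apply_eq hA₁ hγ (by
    rw [add_sub_cancel_left]
    exact Set.smul_mem_smul_set rfl)

theorem douglasRachford_add_smul {γ : ℝ} {J₁ J₂ : H → H} {p u : H} (hA₂ : SVMonotone A₂)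
    (hγ : 0 ≤ γ) (hJ₂ : IsResolventOf A₂ γ J₂) (hJ₁p : J₁ (p + γ • u) = p) (hp : -u ∈ A₂ p) :
    douglasRachford J₁ J₂ (p + γ • u) = p + γ • u := by
  have hJ₂p : J₂ ((2 : ℝ) • p - (p + γ • u)) = p := by
    refine hJ₂.apply_eq hA₂ hγ ?_
    convert Set.smul_mem_smul_set (a := γ) hp using 1
    module
  rw [douglasRachford, hJ₁p, hJ₂p]
  abel

theorem norm_douglasRachford_sub_add_smul_le {γ : ℝ} {J₁ J₂ : H → H} {p : H}
    (hA₁ : SVMonotone fun p => ({A₁ p} : Set H)) (hL : LipschitzWith L A₁)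
    (hA₂ : SVStrongMonotone μ A₂) (hμ : 0 ≤ μ) (hp : -A₁ p ∈ A₂ p) (hγ : 0 ≤ γ)
    (hJ₁ : IsResolventOf (fun p => {A₁ p}) γ J₁) (hJ₂ : IsResolventOf A₂ γ J₂) (x : H) :
    ‖douglasRachford J₁ J₂ x - (p + γ • A₁ p)‖ ≤
      douglasRachfordRate (γ * μ) (γ * L) * ‖x - (p + γ • A₁ p)‖ := by
  have hJ₁p := resolvent_add_smul_of_singleton hA₁ hγ hJ₁ p
  have hTp := douglasRachford_add_smul (hA₂.monotone hμ) hγ hJ₂ hJ₁p hp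
  simpa only [hTp] using norm_douglasRachford_sub_le hA₁ hL hA₂ hμ hγ hJ₁ hJ₂ x (p + γ • A₁ p)

theorem rLinearTo_relocated_douglasRachford_sub {J₁ J₂ : ℝ → H → H} {γ : ℕ → ℝ} {γs : ℝ}
    {x : ℕ → H} {p : H}
    (hA₁ : SVMonotone fun p => ({A₁ p} : Set H)) (hL : LipschitzWith L A₁)
    (hA₂ : SVStrongMonotone μ A₂) (hμ : 0 < μ) (hp : -A₁ p ∈ A₂ p)
    (hJ₁ : ∀ γ, 0 < γ → IsResolventOf (fun p => {A₁ p}) γ (J₁ γ))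
    (hJ₂ : ∀ γ, 0 < γ → IsResolventOf A₂ γ (J₂ γ))
    (hγ : ∀ n, 0 < γ n) (hγs : 0 < γs) (hγlim : Tendsto γ atTop (𝓝 γs))
    (hx : ∀ n, x (n + 1) =
      relocator (J₁ (γ n)) (γ n) (γ (n + 1)) (douglasRachford (J₁ (γ n)) (J₂ (γ n)) (x n))) :
    RLinearTo (fun n => x n - (p + γ n • A₁ p)) 0 := by
  set rate : ℝ → ℝ := fun γ => douglasRachfordRate (γ * μ) (γ * L)
  have hrate : Tendsto (fun n => rate (γ n)) atTop (𝓝 (rate γs)) :=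
    tendsto_douglasRachfordRate (hγlim.mul_const μ) (hγlim.mul_const (L : ℝ))
      (by positivity) (by positivity)
  have hratio : Tendsto (fun n => 1 + |γ (n + 1) / γ n - 1|) atTop (𝓝 1) := by
    simpa [hγs.ne'] using
      ((((tendsto_add_atTop_iff_nat 1).2 hγlim).div hγlim hγs.ne').sub_const 1).abs.const_add 1
  refine rLinearTo_zero_of_norm_succ_le
    ((one_mul _).trans_lt (douglasRachfordRate_lt_one (by positivity) (by positivity)))
    (hratio.mul hrate) fun n => ?_
  have hJ₁p := resolvent_add_smul_of_singleton hA₁ (hγ n).le (hJ₁ _ (hγ n)) p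
  rw [hx, ← relocator_add_smul (hγ n).ne' hJ₁p, mul_assoc]
  refine (norm_relocator_sub_le hA₁ (hγ n).le (hJ₁ _ (hγ n)) _ _).trans ?_
  gcongr
  exact norm_douglasRachford_sub_add_smul_le hA₁ hL hA₂ hμ.le hp (hγ n).le (hJ₁ _ (hγ n))
    (hJ₂ _ (hγ n)) _

theorem rLinearTo_resolvent_of_sub {J₁ : ℝ → H → H} {γ : ℕ → ℝ} {x : ℕ → H} {p : H}
    (hA₁ : SVMonotone fun p => ({A₁ p} : Set H))
    (hJ₁ : ∀ γ, 0 < γ → IsResolventOf (fun p => {A₁ p}) γ (J₁ γ)) (hγ : ∀ n, 0 < γ n)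
    (hx : RLinearTo (fun n => x n - (p + γ n • A₁ p)) 0) :
    RLinearTo (fun n => J₁ (γ n) (x n)) p :=
  hx.of_norm_sub_le (c := 1) fun n => by
    rw [one_mul, sub_zero]
    nth_rewrite 1 [← resolvent_add_smul_of_singleton hA₁ (hγ n).le (hJ₁ _ (hγ n)) p]
    exact (hJ₁ _ (hγ n)).norm_sub_le hA₁ (hγ n).le _ _

theorem rLinearTo_douglasRachford_sub {J₁ J₂ : ℝ → H → H} {γ : ℕ → ℝ} {x : ℕ → H} {p : H}
    (hA₁ : SVMonotone fun p => ({A₁ p} : Set H)) (hL : LipschitzWith L A₁)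
    (hA₂ : SVStrongMonotone μ A₂) (hμ : 0 < μ) (hp : -A₁ p ∈ A₂ p)
    (hJ₁ : ∀ γ, 0 < γ → IsResolventOf (fun p => {A₁ p}) γ (J₁ γ))
    (hJ₂ : ∀ γ, 0 < γ → IsResolventOf A₂ γ (J₂ γ)) (hγ : ∀ n, 0 < γ n)
    (hx : RLinearTo (fun n => x n - (p + γ n • A₁ p)) 0) :
    RLinearTo (fun n => douglasRachford (J₁ (γ n)) (J₂ (γ n)) (x n) - (p + γ n • A₁ p)) 0 :=
  hx.of_norm_sub_le (c := 1) fun n => by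
    rw [sub_zero, sub_zero]
    refine (norm_douglasRachford_sub_add_smul_le hA₁ hL hA₂ hμ.le hp (hγ n).le (hJ₁ _ (hγ n))
      (hJ₂ _ (hγ n)) _).trans ?_
    gcongr
    exact (douglasRachfordRate_lt_one (mul_pos (hγ n) hμ)
      (mul_nonneg (hγ n).le L.coe_nonneg)).le

end DouglasRachford

theorem stmt14_general
    {L : NNReal} {μ : ℝ} (hμ : 0 < μ)
    {A₁ : H → H} (hA₁ : SVMonotone fun p => ({A₁ p} : Set H)) (hA₁lip : LipschitzWith L A₁)
    {A₂ : H → Set H} (hA₂ : SVStrongMonotone μ A₂)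
    (hPne : {p : H | (0 : H) ∈ ({A₁ p} : Set H) + A₂ p}.Nonempty)
    {J₁ J₂ : ℝ → H → H}
    (hJ₁ : ∀ γ : ℝ, 0 < γ → ∀ x : H, x - J₁ γ x = γ • A₁ (J₁ γ x))
    (hJ₂ : ∀ γ : ℝ, 0 < γ → IsResolventOf A₂ γ (J₂ γ))
    {T : ℝ → H → H}
    (hT : ∀ (γ : ℝ) (x : H), T γ x = x - J₁ γ x + J₂ γ ((2 : ℝ) • J₁ γ x - x))
    {γseq : ℕ → ℝ} (hγ : ∀ n, 0 < γseq n)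
    {γs : ℝ} (hγs : 0 < γs) (hγlin : RLinearTo γseq γs)
    {x z y w : ℕ → H}
    (hz0 : z 0 = J₁ (γseq 0) (x 0))
    (hy : ∀ n : ℕ, y n = J₂ (γseq n) ((2 : ℝ) • z n - x n))
    (hw : ∀ n : ℕ, w n = x n - z n + y n)
    (hz : ∀ n : ℕ, z (n + 1) = J₁ (γseq n) (w n))
    (hx : ∀ n : ℕ, x (n + 1) =
      (γseq (n + 1) / γseq n) • w n + (1 - γseq (n + 1) / γseq n) • z (n + 1)) :
    ∃ xs : H, xs ∈ FixSet (T γs) ∧ RLinearTo x xs ∧ RLinearTo w xs ∧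
      J₁ γs xs ∈ {p : H | (0 : H) ∈ ({A₁ p} : Set H) + A₂ p} ∧
      RLinearTo z (J₁ γs xs) ∧ RLinearTo y (J₁ γs xs) ∧
      γs⁻¹ • (xs - J₁ γs xs) ∈
        {q : H | (0 : H) ∈ SVInv (fun p => ({A₁ p} : Set H)) q - SVInv A₂ (-q)} ∧
      RLinearTo (fun n => (γseq n)⁻¹ • (x n - z n)) (γs⁻¹ • (xs - J₁ γs xs)) ∧
      RLinearTo (fun n => (γseq n)⁻¹ • (w n - y n)) (γs⁻¹ • (xs - J₁ γs xs)) := by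
  obtain ⟨p, hp⟩ := hPne
  have hpA₂ : -A₁ p ∈ A₂ p := by simpa using hp
  have hres (γ : ℝ) (hγ : 0 < γ) : IsResolventOf (fun p => {A₁ p}) γ (J₁ γ) :=
    isResolventOf_singleton_iff.2 (hJ₁ γ hγ)
  have hJ₁p : J₁ γs (p + γs • A₁ p) = p :=
    resolvent_add_smul_of_singleton hA₁ hγs.le (hres γs hγs) p
  have hTp : douglasRachford (J₁ γs) (J₂ γs) (p + γs • A₁ p) = p + γs • A₁ p :=
    douglasRachford_add_smul (hA₂.monotone hμ.le) hγs.le (hJ₂ γs hγs) hJ₁p hpA₂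
  have hxQ (n : ℕ) : x (n + 1) = relocator (J₁ (γseq n)) (γseq n) (γseq (n + 1)) (w n) := by
    rw [hx, hz, relocator]
  have hzx : ∀ n, z n = J₁ (γseq n) (x n) :=
    eq_resolvent_of_relocator hA₁ hres hγ hz0 hz hxQ
  have hwT (n : ℕ) : w n = douglasRachford (J₁ (γseq n)) (J₂ (γseq n)) (x n) := by
    rw [hw, hy, hzx, douglasRachford]
  have hxz (n : ℕ) : (γseq n)⁻¹ • (x n - z n) = A₁ (z n) := by
    rw [hzx, hJ₁ _ (hγ n), inv_smul_smul₀ (hγ n).ne']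
  have hwy (n : ℕ) : w n - y n = x n - z n := by rw [hw, add_sub_cancel_right]
  have hxerr : RLinearTo (fun n => x n - (p + γseq n • A₁ p)) 0 :=
    rLinearTo_relocated_douglasRachford_sub hA₁ hA₁lip hA₂ hμ hpA₂ hres hJ₂ hγ hγs hγlin.tendsto
      fun n => by rw [hxQ, hwT]
  have hwerr : RLinearTo (fun n => w n - (p + γseq n • A₁ p)) 0 :=
    funext hwT ▸ rLinearTo_douglasRachford_sub hA₁ hA₁lip hA₂ hμ hpA₂ hres hJ₂ hγ hxerr
  have hcenter := hγlin.const_add_smul p (A₁ p)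
  have hxlim : RLinearTo x (p + γs • A₁ p) := by simpa using hxerr.add hcenter
  have hwlim : RLinearTo w (p + γs • A₁ p) := by simpa using hwerr.add hcenter
  have hzlim : RLinearTo z p := funext hzx ▸ rLinearTo_resolvent_of_sub hA₁ hres hγ hxerr
  have hylim : RLinearTo y p := by simpa [hw] using hwlim.sub (hxlim.sub hzlim)
  have hAlim : RLinearTo (fun n => A₁ (z n)) (A₁ p) := hzlim.lipschitz_comp hA₁lip
  refine ⟨p + γs • A₁ p, (hT _ _).trans hTp, hxlim, hwlim, ?_⟩
  rw [hJ₁p, add_sub_cancel_left, inv_smul_smul₀ hγs.ne']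
  simp only [hwy, hxz]
  exact ⟨hp, hzlim, hylim, ⟨p, rfl, p, hpA₂, sub_self p⟩, hAlim, hAlim⟩

end Operators

/-- linear convergence of the relocated Douglas–Rachford algorithm
when `A₁` is single-valued, maximally monotone and `L`-Lipschitz and `A₂` is maximally
monotone and `μ`-strongly monotone with `zer(A₁+A₂) ≠ ∅`: the iterates `(x_n)`, `(w_n)`
converge `R`-linearly to a fixed point `x` of `T_{γ*}`, the shadows `(z_n)`, `(y_n)`
converge `R`-linearly to `z = J_{γ*A₁}x ∈ P`, and `((x_n−z_n)/γ_n)`, `((w_n−y_n)/γ_n)`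
converge `R`-linearly to `g = (x−z)/γ* ∈ D`. -/
theorem stmt14 [NormedAddCommGroup H] [InnerProductSpace ℝ H] [CompleteSpace H]
    (a b : ℝ) (ha : 0 < a) (hab : a ≤ b)
    (L μ : ℝ) (hL : 0 ≤ L) (hμ : 0 < μ)
    (A₁ : H → H)
    (hA₁max : MaxMonotone (fun p => ({A₁ p} : Set H)))
    (hA₁lip : ∀ x y : H, ‖A₁ x - A₁ y‖ ≤ L * ‖x - y‖)
    (A₂ : H → Set H) (hA₂ : MaxMonotone A₂) (hA₂s : SVStrongMonotone μ A₂)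
    (hPne : ({p : H | (0 : H) ∈ ({A₁ p} : Set H) + A₂ p}).Nonempty)
    (J₁ : ℝ → H → H)
    (hJ₁ : ∀ γ : ℝ, 0 < γ → ∀ x : H, x - J₁ γ x = γ • A₁ (J₁ γ x))
    (J₂ : ℝ → H → H)
    (hJ₂ : ∀ γ : ℝ, 0 < γ → IsResolventOf A₂ γ (J₂ γ))
    (T : ℝ → H → H)
    (hT : ∀ (γ : ℝ) (x : H), T γ x = x - J₁ γ x + J₂ γ ((2 : ℝ) • J₁ γ x - x))
    (γseq : ℕ → ℝ) (hγmem : ∀ n, γseq n ∈ Set.Icc a b)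
    (γs : ℝ) (hγs : γs ∈ Set.Icc a b) (hγlin : RLinearTo γseq γs)
    (x z y w : ℕ → H)
    (hz0 : z 0 = J₁ (γseq 0) (x 0))
    (hy : ∀ n : ℕ, y n = J₂ (γseq n) ((2 : ℝ) • z n - x n))
    (hw : ∀ n : ℕ, w n = x n - z n + y n)
    (hz : ∀ n : ℕ, z (n + 1) = J₁ (γseq n) (w n))
    (hx : ∀ n : ℕ, x (n + 1) =
      (γseq (n + 1) / γseq n) • w n + (1 - γseq (n + 1) / γseq n) • z (n + 1)) :
    ∃ xs : H, xs ∈ FixSet (T γs) ∧ RLinearTo x xs ∧ RLinearTo w xs ∧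
      J₁ γs xs ∈ {p : H | (0 : H) ∈ ({A₁ p} : Set H) + A₂ p} ∧
      RLinearTo z (J₁ γs xs) ∧ RLinearTo y (J₁ γs xs) ∧
      γs⁻¹ • (xs - J₁ γs xs) ∈
        {q : H | (0 : H) ∈ SVInv (fun p => ({A₁ p} : Set H)) q - SVInv A₂ (-q)} ∧
      RLinearTo (fun n => (γseq n)⁻¹ • (x n - z n)) (γs⁻¹ • (xs - J₁ γs xs)) ∧
      RLinearTo (fun n => (γseq n)⁻¹ • (w n - y n)) (γs⁻¹ • (xs - J₁ γs xs)) := by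
  exact stmt14_general (L := ⟨L, hL⟩) hμ hA₁max.1 (.of_dist_le_mul (by simpa [dist_eq_norm]))
    hA₂s hPne hJ₁ hJ₂ hT (fun n => ha.trans_le (hγmem n).1) (ha.trans_le hγs.1) hγlin
    hz0 hy hw hz hx
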